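/- Let r : X → X be a retraction of a topological space X with range Z = r(X). If the subspace Z is normal, every fiber r⁻¹(z) (z ∈ Z) is vacuously normal as a subspace, and r (viewed as a map from X onto Z) is a closed map, then X is normal. -/

import Mathlib

/-! Disjoint closed sets `F`, `H` have closed images in `range r`. These images are disjoint: a
common point `z` would make the traces of `F` and `H` on the fiber over `z` disjoint, nonempty and
closed. Disjoint open neighborhoods of the images in the normal space `range r` then pull back
along `r`. -/

/-- A space is vacuously normal if it contains no pair of disjoint
nonempty closed subsets. -/
def VacuouslyNormal (X : Type*) [TopologicalSpace X] : Prop :=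
  ∀ F H : Set X, IsClosed F → IsClosed H → F.Nonempty → H.Nonempty → ¬ Disjoint F H

theorem normal_of_retraction_closed_with_vacuouslyNormal_fibers
    (X : Type*) [TopologicalSpace X] (r : X → X)
    (hcont : Continuous r) (hretr : r ∘ r = r)
    (hZ : NormalSpace (Set.range r))
    (hfib : ∀ z ∈ Set.range r, VacuouslyNormal (r ⁻¹' {z}))
    (hclosed : IsClosedMap (Set.rangeFactorization r)) :
    NormalSpace X := by
  have hc : Continuous (Set.rangeFactorization r) := hcont.subtype_mk _
  refine ⟨fun F H hF hH hFH => ?_⟩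
  have hdisj : Disjoint (Set.rangeFactorization r '' F) (Set.rangeFactorization r '' H) := by
    rw [Set.disjoint_left]
    rintro z ⟨x, hx, hxz⟩ ⟨y, hy, hyz⟩
    have hrx : r x = z := congrArg Subtype.val hxz
    have hry : r y = z := congrArg Subtype.val hyz
    exact hfib z z.2 (Subtype.val ⁻¹' F) (Subtype.val ⁻¹' H)
      (hF.preimage continuous_subtype_val) (hH.preimage continuous_subtype_val)
      ⟨⟨x, hrx⟩, hx⟩ ⟨⟨y, hry⟩, hy⟩ (hFH.preimage _)
  obtain ⟨U, V, hU, hV, hFU, hHV, hUV⟩ :=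
    hZ.normal _ _ (hclosed F hF) (hclosed H hH) hdisj
  exact ⟨_, _, hU.preimage hc, hV.preimage hc, Set.image_subset_iff.1 hFU,
    Set.image_subset_iff.1 hHV, hUV.preimage _⟩
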